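/- For any two vectors v, w ∈ (ℤ/2ℤ)⁴ such that (v₂, v₄) ≠ (0,0) and (w₂, w₄) ≠ (0,0), there exists M ∈ G_Δ such that multiplying v by the reduction of E(M) modulo 2 yields w. (That is, the twelve 2-torsion classes outside im φ₂ form a single orbit under the monodromy action of the paramodular group.) -/

import Mathlib

open Matrix

/-- The standard symplectic matrix `J = [[0, I₂], [−I₂, 0]]` over `ℚ`. -/
def Jmat : Matrix (Fin 4) (Fin 4) ℚ :=
  !![0, 0, 1, 0; 0, 0, 0, 1; -1, 0, 0, 0; 0, -1, 0, 0]

/-- A rational number is an integer. -/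
def IsIntEntry (q : ℚ) : Prop := ∃ n : ℤ, q = n

/-- A rational number is an even integer (lies in `2ℤ`). -/
def IsEvenEntry (q : ℚ) : Prop := ∃ n : ℤ, q = 2 * n

/-- A rational number is a half-integer (`2·q ∈ ℤ`). -/
def IsHalfIntEntry (q : ℚ) : Prop := ∃ n : ℤ, 2 * q = n

/-- Membership in the paramodular group `G_Δ` for `Δ = diag(1,2)`:
`Mᵀ·J·M = J`, together with the integrality pattern: all entries in `ℤ`,
except that `M₁₄, M₂₁, M₂₃, M₂₄, M₃₄ ∈ 2ℤ` and `2·M₄₂ ∈ ℤ`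
(indices here are 0-based: `M 0 3, M 1 0, M 1 2, M 1 3, M 2 3, M 3 1`). -/
def IsParamodular (M : Matrix (Fin 4) (Fin 4) ℚ) : Prop :=
  Mᵀ * Jmat * M = Jmat ∧
  IsEvenEntry (M 0 3) ∧ IsEvenEntry (M 1 0) ∧ IsEvenEntry (M 1 2) ∧
  IsEvenEntry (M 1 3) ∧ IsEvenEntry (M 2 3) ∧ IsHalfIntEntry (M 3 1) ∧
  ∀ i j : Fin 4,
    (i, j) ∉ ({(0, 3), (1, 0), (1, 2), (1, 3), (2, 3), (3, 1)} :
      Set (Fin 4 × Fin 4)) → IsIntEntry (M i j)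

/-- The diagonal matrix `D = diag(1,1,1,2)` over `ℚ`. -/
def Dmat : Matrix (Fin 4) (Fin 4) ℚ :=
  !![1, 0, 0, 0; 0, 1, 0, 0; 0, 0, 1, 0; 0, 0, 0, 2]

/-- The conjugation `E(M) = D·M·D⁻¹`. -/
noncomputable def Emat (M : Matrix (Fin 4) (Fin 4) ℚ) : Matrix (Fin 4) (Fin 4) ℚ :=
  Dmat * M * Dmat⁻¹

/-- Reduction modulo 2 of a rational matrix with integer entries
(entrywise, via the numerator). -/
def red2 (M : Matrix (Fin 4) (Fin 4) ℚ) : Matrix (Fin 4) (Fin 4) (ZMod 2) :=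
  Matrix.of fun i j => ((M i j).num : ZMod 2)

def Mp (a c l m p q r s : ℤ) : Matrix (Fin 4) (Fin 4) ℚ :=
  !![1, a*l, 0, 2*(a*m);
     2*(c*(q*l-p*m)), p, 2*(-a*(q*l-p*m)), 2*q;
     0, c*l, 1, 2*(c*m);
     c*(s*l-r*m), r/2, -a*(s*l-r*m), s]

def Ep (a c l m p q r s : ℤ) : Matrix (Fin 4) (Fin 4) ℤ :=
  !![1, a*l, 0, a*m;
     2*(c*(q*l-p*m)), p, 2*(-a*(q*l-p*m)), q;
     0, c*l, 1, c*m;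
     2*(c*(s*l-r*m)), r, 2*(-a*(s*l-r*m)), s]

lemma Dinv : Dmat⁻¹ = !![1, 0, 0, 0; 0, 1, 0, 0; 0, 0, 1, 0; 0, 0, 0, 1/2] := by
  apply Matrix.inv_eq_right_inv
  ext i j
  fin_cases i <;> fin_cases j <;> simp [Dmat, Matrix.mul_apply, Fin.sum_univ_four]

lemma Emat_Mp (a c l m p q r s : ℤ) :
    Emat (Mp a c l m p q r s) = (Ep a c l m p q r s).map (fun x : ℤ => (x : ℚ)) := by
  unfold Emat
  rw [Dinv]
  ext i j
  fin_cases i <;> fin_cases j <;>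
    simp [Dmat, Mp, Ep, Matrix.mul_apply, Fin.sum_univ_four] <;> ring

lemma para_Mp (a c l m p q r s : ℤ) (h : p * s - q * r = 1) :
    IsParamodular (Mp a c l m p q r s) := by
  have h' : (p : ℚ) * s - q * r = 1 := by exact_mod_cast h
  refine ⟨?_, ⟨a*m, by simp [Mp]⟩, ⟨c*(q*l-p*m), by simp [Mp]⟩,
    ⟨-a*(q*l-p*m), by simp [Mp]⟩, ⟨q, by simp [Mp]⟩, ⟨c*m, by simp [Mp]⟩,
    ⟨r, by simp [Mp]; ring⟩, ?_⟩
  · ext i j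
    fin_cases i <;> fin_cases j <;>
      simp [Jmat, Mp, Matrix.mul_apply, Fin.sum_univ_four] <;> grind
  · intro i j hij
    fin_cases i <;> fin_cases j <;> simp at hij <;> simp only [IsIntEntry, Mp]
    · exact ⟨1, by simp⟩
    · exact ⟨a*l, by simp⟩
    · exact ⟨0, by simp⟩
    · exact ⟨p, by simp⟩
    · exact ⟨0, by simp⟩
    · exact ⟨c*l, by simp⟩
    · exact ⟨1, by simp⟩
    · exact ⟨c*(s*l-r*m), by simp⟩
    · exact ⟨-a*(s*l-r*m), by simp⟩
    · exact ⟨s, by simp⟩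

lemma exists_form : ∀ x y : ZMod 2, ¬(x = 0 ∧ y = 0) →
    ∃ l m : ZMod 2, l * x + m * y = 1 := by decide

lemma exists_sl (x y z t : ZMod 2) (h1 : ¬(x = 0 ∧ y = 0)) (h2 : ¬(z = 0 ∧ t = 0)) :
    ∃ p q r s : ℤ, p * s - q * r = 1 ∧ (p : ZMod 2) * x + q * y = z ∧
      (r : ZMod 2) * x + s * y = t := by
  have key : ∀ x y z t : ZMod 2, ¬(x = 0 ∧ y = 0) → ¬(z = 0 ∧ t = 0) →
      (x = z ∧ y = t) ∨ (y = z ∧ x = t) ∨ (x + y = z ∧ y = t) ∨ (x = z ∧ x + y = t) := by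
    decide
  have hn : ∀ x : ZMod 2, -x = x := by decide
  rcases key x y z t h1 h2 with h | h | h | h
  · exact ⟨1, 0, 0, 1, by norm_num, by simp [h], by simp [h]⟩
  · exact ⟨0, 1, -1, 0, by norm_num, by simp [h], by simp [h, hn]⟩
  · exact ⟨1, 1, 0, 1, by norm_num, by simpa using h.1, by simpa using h.2⟩
  · exact ⟨1, 0, 1, 1, by norm_num, by simpa using h.1, by simpa using h.2⟩

theorem orbit_outside_im_phi2 (v w : Fin 4 → ZMod 2)
    (hv : ¬(v 1 = 0 ∧ v 3 = 0)) (hw : ¬(w 1 = 0 ∧ w 3 = 0)) :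
    ∃ M : Matrix (Fin 4) (Fin 4) ℚ,
      IsParamodular M ∧ (red2 (Emat M)).mulVec v = w := by
  obtain ⟨l', m', hl⟩ := exists_form _ _ hv
  obtain ⟨p, q, r, s, hdet, h1, h2⟩ := exists_sl _ _ _ _ hv hw
  obtain ⟨l, rfl⟩ := ZMod.intCast_surjective l'
  obtain ⟨m, rfl⟩ := ZMod.intCast_surjective m'
  obtain ⟨a, ha⟩ := ZMod.intCast_surjective (w 0 - v 0)
  obtain ⟨c, hc⟩ := ZMod.intCast_surjective (w 2 - v 2)
  refine ⟨Mp a c l m p q r s, para_Mp _ _ _ _ _ _ _ _ hdet, ?_⟩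
  have hred : red2 (Emat (Mp a c l m p q r s)) =
      (Ep a c l m p q r s).map (fun x : ℤ => (x : ZMod 2)) := by
    rw [Emat_Mp]
    ext i j
    simp [red2]
  have h20 : (2 : ZMod 2) = 0 := by decide
  rw [hred]
  ext i
  fin_cases i <;> simp [Ep, Matrix.mulVec, dotProduct, Fin.sum_univ_four, h20]
  · linear_combination (a : ZMod 2) * hl + ha
  · exact h1
  · linear_combination (c : ZMod 2) * hl + hc
  · exact h2
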